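/- arXiv:0802.0663 — 5 statements merged into one kernel-verified Lean document; each statement's English description precedes it below -/
import Mathlib

section
/- Let E and F be real normed vector spaces, let k be a natural number, and let f : E → F be a smooth map (ContDiff ℝ ⊤). Then the following are equivalent: (i) for every x ∈ E the rank of the Fréchet derivative fderiv ℝ f x (i.e. Module.rank of its range) is at most k; (ii) the pullback along f of every smooth (k+1)-form on F vanishes identically, i.e. for every smooth map ω : F → ContinuousAlternatingMap ℝ F ℝ (Fin (k+1)), every x ∈ E and every family v : Fin (k+1) → E one has ω (f x) (fun i => fderiv ℝ f x (v i)) = 0. -/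
/-!
At a point `x`, put `A = fderiv ℝ f x`. If `A` has rank at most `k`, any `k + 1` vectors in its range
are linearly dependent, and an alternating map vanishes on dependent families. Conversely, if the
rank of `A` exceeds `k`, there are `k + 1` linearly independent vectors `A (v i)`. Hahn–Banach gives
a continuous linear map `F → ℝᵏ⁺¹` sending them to the standard basis, and the determinant pulled
back along it is an alternating form with value `1` on them
(`exists_continuousAlternatingMap_apply_eq_one`). The corresponding constant form on `F` is smooth
and its pullback along `f` does not vanish at `x`.
-/

/-- In a normed space, where Hahn–Banach is available, a finite linearly independent family is
detected by a continuous alternating form. -/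
theorem exists_continuousAlternatingMap_apply_eq_one
    {F : Type*} [NormedAddCommGroup F] [NormedSpace ℝ F] {n : ℕ} {w : Fin n → F}
    (hw : LinearIndependent ℝ w) :
    ∃ η : ContinuousAlternatingMap ℝ F ℝ (Fin n), η w = 1 := by
  have : FiniteDimensional ℝ (Submodule.span ℝ (Set.range w)) :=
    FiniteDimensional.span_of_finite ℝ (Set.finite_range w)
  let b := Module.Basis.span hw
  obtain ⟨P, hP⟩ := ContinuousLinearMap.exist_extension_of_finiteDimensional_range
    (LinearMap.toContinuousLinearMap b.equivFun.toLinearMap)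
  have hPw (i : Fin n) : P (w i) = Pi.single i 1 := by
    have hb : ((b i : Submodule.span ℝ (Set.range w)) : F) = w i :=
      congrArg Subtype.val (Module.Basis.span_apply hw i)
    have h := DFunLike.congr_fun hP (b i)
    simp only [ContinuousLinearMap.comp_apply, Submodule.subtypeL_apply, hb] at h
    rw [← h]
    ext j
    simp [Pi.single_apply, eq_comm]
  let D : ContinuousAlternatingMap ℝ (Fin n → ℝ) ℝ (Fin n) :=
    { Matrix.detRowAlternating (R := ℝ) (n := Fin n) with
      cont := Continuous.matrix_det (A := fun M : Matrix (Fin n) (Fin n) ℝ => M) continuous_id }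
  refine ⟨D.compContinuousLinearMap P, ?_⟩
  change Matrix.det (fun i => P (w i)) = 1
  have h1 : (fun i => P (w i)) = (1 : Matrix (Fin n) (Fin n) ℝ) := by
    ext i j
    simp [hPw, Matrix.one_apply, Pi.single_apply, eq_comm]
  rw [h1, Matrix.det_one]

/-- Lemma 5.5 of the paper. For a smooth map `f : E → F` between real
normed vector spaces, the rank of `fderiv ℝ f x` is everywhere at most `k` if and only if
the pullback along `f` of every smooth `(k+1)`-form on `F` vanishes identically. -/
theorem rank_fderiv_le_iff_pullback_forms_vanish
    {E F : Type*} [NormedAddCommGroup E] [NormedSpace ℝ E]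
    [NormedAddCommGroup F] [NormedSpace ℝ F] (k : ℕ) (f : E → F)
    (hf : ContDiff ℝ (⊤ : ℕ∞) f) :
    (∀ x : E, Module.rank ℝ (LinearMap.range (fderiv ℝ f x).toLinearMap) ≤ (k : Cardinal)) ↔
      (∀ ω : F → ContinuousAlternatingMap ℝ F ℝ (Fin (k + 1)),
        ContDiff ℝ (⊤ : ℕ∞) (fun y => (ω y).toContinuousMultilinearMap) →
        ∀ (x : E) (v : Fin (k + 1) → E),
          ω (f x) (fun i => fderiv ℝ f x (v i)) = 0) := by
  constructor
  · intro h ω _ x v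
    refine (ω (f x)).toAlternatingMap.map_linearDependent _ fun hli => ?_
    have hli' : LinearIndependent ℝ (fun i => (fderiv ℝ f x).toLinearMap.rangeRestrict (v i)) :=
      LinearIndependent.of_comp (LinearMap.range (fderiv ℝ f x).toLinearMap).subtype hli
    have hrank := hli'.cardinal_lift_le_rank.trans (Cardinal.lift_le.2 (h x))
    simp only [Cardinal.mk_fin, Cardinal.lift_natCast, Nat.cast_le] at hrank
    omega
  · intro h x
    by_contra! hlt
    have hle : ((k + 1 : ℕ) : Cardinal) ≤
        Module.rank ℝ (LinearMap.range (fderiv ℝ f x).toLinearMap) := by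
      rw [Nat.cast_succ, ← Cardinal.succ_natCast]
      exact Order.succ_le_of_lt hlt
    obtain ⟨w, hw⟩ := Module.le_rank_iff.1 hle
    have hli : LinearIndependent ℝ (fun i => (w i : F)) :=
      hw.map' (LinearMap.range (fderiv ℝ f x).toLinearMap).subtype (Submodule.ker_subtype _)
    choose v hv using fun i => (w i).2
    obtain ⟨η, hη⟩ := exists_continuousAlternatingMap_apply_eq_one hli
    have hzero := h (fun _ => η) contDiff_const x v
    have hv' : (fun i => fderiv ℝ f x (v i)) = fun i => (w i : F) := funext hv
    rw [hv', hη] at hzero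
    exact one_ne_zero hzero
end

section
/- Let k be a natural number and let a, b : ℝ × ℝ → Matrix k k ℝ be smooth with a (s, 0) = 0 and a (s, 1) = 0 for all s ∈ [0,1]. Define the curvature K (s,t) = ∂_s b (s,t) − ∂_t a (s,t) + [a (s,t), b (s,t)]. Let τ : ℝ × ℝ → Matrix k k ℝ be smooth such that for all (s,t) ∈ [0,1] × [0,1]: τ (s, 0) = 1, τ (s,t) is invertible, and ∂_t τ (s,t) = − b (s,t) * τ (s,t) (so τ (s, ·) is the parallel transport of the connection (a,b) along the path t ↦ (s,t)). Let g : ℝ → Matrix k k ℝ be differentiable with g 0 = 1 and g' (s) = − g (s) * ∫₀¹ (τ (s,t))⁻¹ * K (s,t) * τ (s,t) dt for all s ∈ [0,1]. Then g 1 = (τ (0,1))⁻¹ * τ (1,1). (Non-abelian Stokes' theorem: the path-ordered exponential over s of the fibre-integrated, transport-conjugated curvature of the square relates the parallel transports along the source path t ↦ (0,t) and the target path t ↦ (1,t).) -/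
/-!
Write `σ = ∂_s τ` and consider the covariant derivative of `τ` in the `s`-direction, read in the
frame `τ`: `W = τ⁻¹ * (σ + a * τ)`. Since `∂_t τ = - b * τ` and the mixed partial derivatives of
`τ` commute, the terms without curvature cancel and `∂_t W = - τ⁻¹ * K * τ`. As `a` vanishes at
`t = 0, 1` and `τ (s, 0) = 1`, integrating over `t` gives
`∫₀¹ τ⁻¹ * K * τ dt = - (τ (s, 1))⁻¹ * σ (s, 1)` (`integral_conj_curvature`). Hence `g` solves
`g' = g * (τ (s, 1))⁻¹ * σ (s, 1)`, so `s ↦ g s * (τ (s, 1))⁻¹` has derivative zero, and comparing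
its values at `s = 0` and `s = 1` gives the theorem.

The equation for `∂_t τ` holds only on the closed square, so it can be differentiated in `s` only
at interior points. All derivatives are therefore computed for `s, t ∈ (0, 1)`, and the
fundamental theorem of calculus is used in the form that requires just continuity at the endpoints.
-/

section MatrixCalculus

/- Differentiability depends only on the topology of the matrix algebra, so the product and inverse
rules may be taken from the normed-ring structure of the operator norm. -/
attribute [local instance] Matrix.linftyOpNormedRing Matrix.linftyOpNormedAlgebra

theorem hasDerivAt_matrix_mul {k : ℕ} {x y : ℝ → Matrix (Fin k) (Fin k) ℝ}
    {x' y' : Matrix (Fin k) (Fin k) ℝ} {t : ℝ}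
    (hx : HasDerivAt x x' t) (hy : HasDerivAt y y' t) :
    HasDerivAt (fun t => x t * y t) (x' * y t + x t * y') t :=
  hx.mul hy

theorem hasDerivAt_matrix_inv {k : ℕ} {x : ℝ → Matrix (Fin k) (Fin k) ℝ}
    {x' : Matrix (Fin k) (Fin k) ℝ} {t : ℝ}
    (hx : HasDerivAt x x' t) (hu : IsUnit (x t)) :
    HasDerivAt (fun t => (x t)⁻¹) (-((x t)⁻¹ * x' * (x t)⁻¹)) t := by
  obtain ⟨u, hu⟩ := hu
  have h1 := hasFDerivAt_ringInverse (𝕜 := ℝ) u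
  rw [hu] at h1
  have h2 := h1.comp_hasDerivAt t hx
  have e : ∀ A : Matrix (Fin k) (Fin k) ℝ, A⁻¹ = Ring.inverse A :=
    Matrix.nonsing_inv_eq_ringInverse
  simp only [e]
  convert! h2 using 1
  simp [← hu]

end MatrixCalculus

section PartialDerivatives

variable {E : Type*} [NormedAddCommGroup E] [NormedSpace ℝ E]

theorem hasDerivAt_fst_of_contDiff {f : ℝ × ℝ → E} (hf : ContDiff ℝ (⊤ : ℕ∞) f) (s t : ℝ) :
    HasDerivAt (fun s' => f (s', t)) (fderiv ℝ f (s, t) ((1 : ℝ), (0 : ℝ))) s := by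
  have h1 : HasFDerivAt f (fderiv ℝ f (s, t)) (s, t) :=
    (hf.differentiable (by simp) (s, t)).hasFDerivAt
  exact h1.comp_hasDerivAt s ((hasDerivAt_id s).prodMk (hasDerivAt_const s t))

theorem hasDerivAt_snd_of_contDiff {f : ℝ × ℝ → E} (hf : ContDiff ℝ (⊤ : ℕ∞) f) (s t : ℝ) :
    HasDerivAt (fun t' => f (s, t')) (fderiv ℝ f (s, t) ((0 : ℝ), (1 : ℝ))) t := by
  have h1 : HasFDerivAt f (fderiv ℝ f (s, t)) (s, t) :=
    (hf.differentiable (by simp) (s, t)).hasFDerivAt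
  exact h1.comp_hasDerivAt t ((hasDerivAt_const t s).prodMk (hasDerivAt_id t))

theorem contDiff_fderiv_apply {f : ℝ × ℝ → E} (hf : ContDiff ℝ (⊤ : ℕ∞) f) (v : ℝ × ℝ) :
    ContDiff ℝ (⊤ : ℕ∞) (fun p => fderiv ℝ f p v) :=
  (hf.fderiv_right (m := (⊤ : ℕ∞)) (by simp)).clm_apply contDiff_const

theorem fderiv_fderiv_apply_comm {f : ℝ × ℝ → E} (hf : ContDiff ℝ (⊤ : ℕ∞) f)
    (p v w : ℝ × ℝ) :
    fderiv ℝ (fun q => fderiv ℝ f q v) p w = fderiv ℝ (fun q => fderiv ℝ f q w) p v := by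
  have hd : DifferentiableAt ℝ (fderiv ℝ f) p :=
    (hf.fderiv_right (m := (⊤ : ℕ∞)) (by simp)).differentiable (by simp) p
  have e : ∀ v w : ℝ × ℝ,
      fderiv ℝ (fun q => fderiv ℝ f q v) p w = fderiv ℝ (fderiv ℝ f) p w v := by
    intro v w
    rw [fderiv_clm_apply hd (differentiableAt_const v)]
    simp
  rw [e, e]
  exact (hf.contDiffAt.isSymmSndFDerivAt (n := (⊤ : ℕ∞)) (by
    simpa using! (WithTop.coe_le_coe.mpr le_top : ((2 : ℕ∞) : WithTop ℕ∞) ≤ (⊤ : ℕ∞)))) w v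

end PartialDerivatives

attribute [local instance] Matrix.normedAddCommGroup Matrix.normedSpace

/-- The mixed partial derivative of `τ`, obtained by differentiating `∂_t τ = - b * τ` in `s`. -/
theorem hasDerivAt_fderiv_transport {k : ℕ} {b τ : ℝ × ℝ → Matrix (Fin k) (Fin k) ℝ}
    (hb : ContDiff ℝ (⊤ : ℕ∞) b) (hτ : ContDiff ℝ (⊤ : ℕ∞) τ)
    (hτt : ∀ p ∈ Set.Icc (0 : ℝ) 1 ×ˢ Set.Icc (0 : ℝ) 1,
      fderiv ℝ τ p ((0 : ℝ), (1 : ℝ)) = - b p * τ p)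
    {s t : ℝ} (hs : s ∈ Set.Ioo (0 : ℝ) 1) (ht : t ∈ Set.Ioo (0 : ℝ) 1) :
    HasDerivAt (fun t' => fderiv ℝ τ (s, t') ((1 : ℝ), (0 : ℝ)))
      (-(fderiv ℝ b (s, t) ((1 : ℝ), (0 : ℝ)) * τ (s, t)
        + b (s, t) * fderiv ℝ τ (s, t) ((1 : ℝ), (0 : ℝ)))) t := by
  have h1 := hasDerivAt_snd_of_contDiff (contDiff_fderiv_apply hτ ((1 : ℝ), (0 : ℝ))) s t
  rw [fderiv_fderiv_apply_comm hτ] at h1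
  have h2 := hasDerivAt_fst_of_contDiff (contDiff_fderiv_apply hτ ((0 : ℝ), (1 : ℝ))) s t
  have h3 := (hasDerivAt_matrix_mul (hasDerivAt_fst_of_contDiff hb s t)
    (hasDerivAt_fst_of_contDiff hτ s t)).neg
  have h4 : (fun s' => fderiv ℝ τ (s', t) ((0 : ℝ), (1 : ℝ))) =ᶠ[nhds s]
      (-fun s' => b (s', t) * τ (s', t)) := by
    filter_upwards [Ioo_mem_nhds hs.1 hs.2] with s' hs'
    rw [hτt _ ⟨Set.Ioo_subset_Icc_self hs', Set.Ioo_subset_Icc_self ht⟩]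
    simp
  rw [h2.unique (h3.congr_of_eventuallyEq h4)] at h1
  exact h1

/-- The fibre integral of the transport-conjugated curvature is minus the logarithmic derivative of
the full transport `τ (s, 1)`. -/
theorem integral_conj_curvature {k : ℕ} {a b τ : ℝ × ℝ → Matrix (Fin k) (Fin k) ℝ}
    (ha : ContDiff ℝ (⊤ : ℕ∞) a) (hb : ContDiff ℝ (⊤ : ℕ∞) b)
    (ha0 : ∀ s ∈ Set.Icc (0 : ℝ) 1, a (s, 0) = 0)
    (ha1 : ∀ s ∈ Set.Icc (0 : ℝ) 1, a (s, 1) = 0)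
    (hτ : ContDiff ℝ (⊤ : ℕ∞) τ)
    (hτ0 : ∀ s ∈ Set.Icc (0 : ℝ) 1, τ (s, 0) = 1)
    (hτu : ∀ p ∈ Set.Icc (0 : ℝ) 1 ×ˢ Set.Icc (0 : ℝ) 1, IsUnit (τ p))
    (hτt : ∀ p ∈ Set.Icc (0 : ℝ) 1 ×ˢ Set.Icc (0 : ℝ) 1,
      fderiv ℝ τ p ((0 : ℝ), (1 : ℝ)) = - b p * τ p)
    {s : ℝ} (hs : s ∈ Set.Ioo (0 : ℝ) 1) :
    ∫ t in (0 : ℝ)..1,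
        (τ (s, t))⁻¹ *
          (fderiv ℝ b (s, t) ((1 : ℝ), (0 : ℝ)) - fderiv ℝ a (s, t) ((0 : ℝ), (1 : ℝ))
            + (a (s, t) * b (s, t) - b (s, t) * a (s, t))) * τ (s, t)
      = -((τ (s, 1))⁻¹ * fderiv ℝ τ (s, 1) ((1 : ℝ), (0 : ℝ))) := by
  have hs' := Set.Ioo_subset_Icc_self hs
  have cont : ∀ {f : ℝ × ℝ → Matrix (Fin k) (Fin k) ℝ}, ContDiff ℝ (⊤ : ℕ∞) f →
      ContinuousOn (fun t => f (s, t)) (Set.Icc (0 : ℝ) 1) := fun hf =>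
    (hf.continuous.comp (by fun_prop : Continuous fun t : ℝ => (s, t))).continuousOn
  have cinv : ContinuousOn (fun t => (τ (s, t))⁻¹) (Set.Icc (0 : ℝ) 1) := fun t ht =>
    (hasDerivAt_matrix_inv (hasDerivAt_snd_of_contDiff hτ s t)
      (hτu _ ⟨hs', ht⟩)).continuousAt.continuousWithinAt
  have cσ := cont (contDiff_fderiv_apply hτ ((1 : ℝ), (0 : ℝ)))
  have cbs := cont (contDiff_fderiv_apply hb ((1 : ℝ), (0 : ℝ)))
  have cat := cont (contDiff_fderiv_apply ha ((0 : ℝ), (1 : ℝ)))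
  have hFTC := intervalIntegral.integral_eq_sub_of_hasDerivAt_of_le (zero_le_one' ℝ)
    (f := fun t => -((τ (s, t))⁻¹ *
      (fderiv ℝ τ (s, t) ((1 : ℝ), (0 : ℝ)) + a (s, t) * τ (s, t))))
    (f' := fun t => (τ (s, t))⁻¹ *
          (fderiv ℝ b (s, t) ((1 : ℝ), (0 : ℝ)) - fderiv ℝ a (s, t) ((0 : ℝ), (1 : ℝ))
            + (a (s, t) * b (s, t) - b (s, t) * a (s, t))) * τ (s, t))
    ((cinv.mul (cσ.add ((cont ha).mul (cont hτ)))).neg)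
    (fun t ht => by
      have htI := Set.Ioo_subset_Icc_self ht
      have hu := hτu _ (⟨hs', htI⟩ : (s, t) ∈ Set.Icc (0 : ℝ) 1 ×ˢ Set.Icc (0 : ℝ) 1)
      have hT : HasDerivAt (fun t' => τ (s, t')) (-b (s, t) * τ (s, t)) t :=
        (hasDerivAt_snd_of_contDiff hτ s t).congr_deriv (hτt _ ⟨hs', htI⟩)
      have hA : HasDerivAt (fun t' => a (s, t')) (fderiv ℝ a (s, t) ((0 : ℝ), (1 : ℝ))) t :=
        hasDerivAt_snd_of_contDiff ha s t
      have hW := (hasDerivAt_matrix_mul (hasDerivAt_matrix_inv hT hu)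
        ((hasDerivAt_fderiv_transport hb hτ hτt hs ht).add
          (hasDerivAt_matrix_mul hA hT))).neg
      convert! hW using 1
      have hc : τ (s, t) * (τ (s, t))⁻¹ = 1 :=
        Matrix.mul_nonsing_inv _ ((Matrix.isUnit_iff_isUnit_det _).mp hu)
      have h1 : (τ (s, t))⁻¹ * (-b (s, t) * τ (s, t)) * (τ (s, t))⁻¹
          = -((τ (s, t))⁻¹ * b (s, t)) := by
        rw [mul_assoc, mul_assoc, hc]; simp
      rw [h1]
      simp only [Pi.add_apply]
      noncomm_ring)
    (ContinuousOn.intervalIntegrable_of_Icc zero_le_one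
      ((cinv.mul ((cbs.sub cat).add
        (((cont ha).mul (cont hb)).sub ((cont hb).mul (cont ha))))).mul (cont hτ)))
  have hσ0 : fderiv ℝ τ (s, 0) ((1 : ℝ), (0 : ℝ)) = 0 := by
    refine (hasDerivAt_fst_of_contDiff hτ s 0).unique
      ((hasDerivAt_const s 1).congr_of_eventuallyEq ?_)
    filter_upwards [Ioo_mem_nhds hs.1 hs.2] with s' hs''
    exact hτ0 s' (Set.Ioo_subset_Icc_self hs'')
  rw [hFTC]
  simp [ha0 s hs', ha1 s hs', hσ0]

/-- non-abelian Stokes' theorem. For a connection `(a, b)` on the square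
with `a` vanishing on the horizontal boundary edges, `τ (s, ·)` the parallel transport of `b`
along vertical paths, and `g` the path-ordered exponential over `s` of the fibre-integrated,
transport-conjugated curvature, one has `g 1 = (τ (0,1))⁻¹ * τ (1,1)`. -/
theorem nonabelian_stokes (k : ℕ)
    (a b τ : ℝ × ℝ → Matrix (Fin k) (Fin k) ℝ)
    (g : ℝ → Matrix (Fin k) (Fin k) ℝ)
    (ha : ContDiff ℝ (⊤ : ℕ∞) a) (hb : ContDiff ℝ (⊤ : ℕ∞) b)
    (ha0 : ∀ s ∈ Set.Icc (0 : ℝ) 1, a (s, 0) = 0)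
    (ha1 : ∀ s ∈ Set.Icc (0 : ℝ) 1, a (s, 1) = 0)
    (hτ : ContDiff ℝ (⊤ : ℕ∞) τ)
    (hτ0 : ∀ s ∈ Set.Icc (0 : ℝ) 1, τ (s, 0) = 1)
    (hτu : ∀ p ∈ Set.Icc (0 : ℝ) 1 ×ˢ Set.Icc (0 : ℝ) 1, IsUnit (τ p))
    (hτt : ∀ p ∈ Set.Icc (0 : ℝ) 1 ×ˢ Set.Icc (0 : ℝ) 1,
      fderiv ℝ τ p ((0 : ℝ), (1 : ℝ)) = - b p * τ p)
    (hg0 : g 0 = 1)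
    (hg : ∀ s ∈ Set.Icc (0 : ℝ) 1, HasDerivAt g
      (- g s * ∫ t in (0 : ℝ)..1,
        (τ (s, t))⁻¹ *
          (fderiv ℝ b (s, t) ((1 : ℝ), (0 : ℝ)) - fderiv ℝ a (s, t) ((0 : ℝ), (1 : ℝ))
            + (a (s, t) * b (s, t) - b (s, t) * a (s, t))) * τ (s, t)) s) :
    g 1 = (τ (0, 1))⁻¹ * τ (1, 1) := by
  have h01 : (1 : ℝ) ∈ Set.Icc (0 : ℝ) 1 := Set.right_mem_Icc.mpr zero_le_one
  have hT : ∀ s, HasDerivAt (fun s' => τ (s', 1)) (fderiv ℝ τ (s, 1) ((1 : ℝ), (0 : ℝ))) s :=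
    fun s => hasDerivAt_fst_of_contDiff hτ s 1
  have hd : ∀ s ∈ Set.Icc (0 : ℝ) 1, HasDerivAt (fun s => g s * (τ (s, 1))⁻¹) _ s := fun s hs =>
    hasDerivAt_matrix_mul (hg s hs)
      (hasDerivAt_matrix_inv (hT s) (hτu _ ⟨hs, h01⟩))
  have hFTC := intervalIntegral.integral_eq_sub_of_hasDerivAt_of_le (zero_le_one' ℝ)
    (f := fun s => g s * (τ (s, 1))⁻¹) (f' := fun _ => 0)
    (fun s hs => (hd s hs).continuousAt.continuousWithinAt)
    (fun s hs => by
      convert! hd s (Set.Ioo_subset_Icc_self hs) using 1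
      rw [integral_conj_curvature ha hb ha0 ha1 hτ hτ0 hτu hτt hs]
      noncomm_ring)
    (by simp)
  simp only [intervalIntegral.integral_zero, hg0, one_mul] at hFTC
  have hdet : IsUnit (τ (1, 1)).det :=
    (Matrix.isUnit_iff_isUnit_det _).mp (hτu _ ⟨h01, h01⟩)
  rw [← sub_eq_zero.mp hFTC.symm, mul_assoc, Matrix.nonsing_inv_mul _ hdet, mul_one]
end

section
/- Let k be a natural number and a, b : ℝ × ℝ → Matrix k k ℝ smooth. Suppose f₁ʰ : ℝ → Matrix k k ℝ, f₁ᵛ : ℝ × ℝ → Matrix k k ℝ, f₂ᵛ : ℝ → Matrix k k ℝ and f₂ʰ : ℝ × ℝ → Matrix k k ℝ are smooth and solve the parallel-transport equations f₁ʰ 0 = 1 and (f₁ʰ)' (t) = − b (0,t) * f₁ʰ (t); f₁ᵛ (0, t) = 1 and ∂_s f₁ᵛ (s,t) = − a (s,t) * f₁ᵛ (s,t); f₂ᵛ 0 = 1 and (f₂ᵛ)' (s) = − a (s,0) * f₂ᵛ (s); f₂ʰ (s, 0) = 1 and ∂_t f₂ʰ (s,t) = − b (s,t) * f₂ʰ (s,t);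 and suppose f₁ᵛ (s,t) * f₁ʰ (t) is invertible for all (s,t). Define u (s,t) = f₂ʰ (s,t) * f₂ᵛ (s) * (f₁ᵛ (s,t) * f₁ʰ (t))⁻¹ (the quotient of the transports along the two boundary halves of the rectangle from (0,0) to (s,t)). Then the mixed second partial derivative of u at (0,0) equals minus the curvature: ∂_s ∂_t u (0,0) = − (∂_s b (0,0) − ∂_t a (0,0) + [a (0,0), b (0,0)]). -/
/-!
Write `G = f1v * f1h`, `F = f2h * f2v` and `u = F * G⁻¹`, which is smooth by Cramer's rule
(`contDiff_inv_matrix`). Instead of differentiating the inverse, the identity `u * G = F` is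
differentiated: on the line `t = 0` the Leibniz rule gives
`∂_t F = u * ∂_t G + ∂_t u * G`, and the `s`-derivative of this at `0` determines `∂_s ∂_t u`.
At the origin `u = G = 1`, the first partials of `F` and `G` agree, so those of `u` vanish, and
* `∂_s ∂_t F = b * a - ∂_s b`, since `∂_t F = - b * f2v` on `t = 0`;
* `∂_s ∂_t G = - ∂_t a + a * b`, where the mixed partial of `f1v` comes from symmetry of second
  derivatives (`fderiv_fderiv_comm`) and the transport equation `∂_s f1v = - a * f1v`.

The difference of the two is minus the curvature.
-/

attribute [local instance] Matrix.normedAddCommGroup Matrix.normedSpace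

section helpers

variable {k : ℕ}

/-- Matrix multiplication as a continuous bilinear map. The entrywise sup norm is not
submultiplicative, so the calculus lemmas for normed algebras do not apply directly;
continuity comes from finite dimension instead. -/
noncomputable def matMul (k : ℕ) : Matrix (Fin k) (Fin k) ℝ →L[ℝ]
    Matrix (Fin k) (Fin k) ℝ →L[ℝ] Matrix (Fin k) (Fin k) ℝ :=
  (LinearMap.mul ℝ (Matrix (Fin k) (Fin k) ℝ)).toContinuousBilinearMap

lemma contDiff_matrix_mul {E : Type*} [NormedAddCommGroup E] [NormedSpace ℝ E] {n : WithTop ℕ∞}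
    {X Y : E → Matrix (Fin k) (Fin k) ℝ} (hX : ContDiff ℝ n X) (hY : ContDiff ℝ n Y) :
    ContDiff ℝ n (fun p => X p * Y p) :=
  (matMul k).isBoundedBilinearMap.contDiff.comp (hX.prodMk hY)

lemma hasDerivAt_matrix_mul_s5 {X Y : ℝ → Matrix (Fin k) (Fin k) ℝ}
    {X' Y' : Matrix (Fin k) (Fin k) ℝ} {s : ℝ}
    (hX : HasDerivAt X X' s) (hY : HasDerivAt Y Y' s) :
    HasDerivAt (fun r => X r * Y r) (X s * Y' + X' * Y s) s :=
  (matMul k).hasDerivAt_of_bilinear (u := X) (v := Y) (fun _ => hX) (fun _ => hY)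

lemma fderiv_matrix_mul_apply {E : Type*} [NormedAddCommGroup E] [NormedSpace ℝ E]
    {X Y : E → Matrix (Fin k) (Fin k) ℝ} {p : E}
    (hX : DifferentiableAt ℝ X p) (hY : DifferentiableAt ℝ Y p) (v : E) :
    fderiv ℝ (fun q => X q * Y q) p v = X p * fderiv ℝ Y p v + fderiv ℝ X p v * Y p := by
  have h := (matMul k).hasFDerivAt_of_bilinear hX.hasFDerivAt hY.hasFDerivAt
  have h2 : HasFDerivAt (fun q => X q * Y q) _ p := h
  rw [h2.fderiv]
  rfl

lemma contDiff_det {E : Type*} [NormedAddCommGroup E] [NormedSpace ℝ E] {n : WithTop ℕ∞}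
    {X : E → Matrix (Fin k) (Fin k) ℝ} (hX : ∀ i j, ContDiff ℝ n (fun p => X p i j)) :
    ContDiff ℝ n (fun p => (X p).det) := by
  simp only [Matrix.det_apply']
  exact ContDiff.sum fun σ _ => contDiff_const.mul (contDiff_prod fun i _ => hX _ _)

/-- The inverse of a smooth family of invertible matrices is smooth, by Cramer's rule. -/
lemma contDiff_inv_matrix {E : Type*} [NormedAddCommGroup E] [NormedSpace ℝ E]
    {n : WithTop ℕ∞} {X : E → Matrix (Fin k) (Fin k) ℝ} (hX : ContDiff ℝ n X)
    (hu : ∀ p, IsUnit (X p)) : ContDiff ℝ n (fun p => (X p)⁻¹) := by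
  have hent : ∀ i j, ContDiff ℝ n (fun p => X p i j) := fun i j =>
    contDiff_pi.1 (contDiff_pi.1 hX i) j
  have hdet := contDiff_det hent
  have hne : ∀ p, (X p).det ≠ 0 := fun p =>
    ((Matrix.isUnit_iff_isUnit_det _).1 (hu p)).ne_zero
  refine contDiff_pi.2 fun i => contDiff_pi.2 fun j => ?_
  simp only [Matrix.inv_def, Matrix.smul_apply, Ring.inverse_eq_inv', smul_eq_mul,
    Matrix.adjugate_apply]
  refine (hdet.inv hne).mul (contDiff_det fun i' j' => ?_)
  by_cases h : i' = j
  · subst h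
    simpa using contDiff_const
  · simpa [Matrix.updateRow_apply, h] using hent i' j'

lemma hasDerivAt_horizontal {h : ℝ × ℝ → Matrix (Fin k) (Fin k) ℝ} {s t : ℝ} (hh : DifferentiableAt ℝ h (s, t)) :
    HasDerivAt (fun r => h (r, t)) (fderiv ℝ h (s, t) (1, 0)) s :=
  hh.hasFDerivAt.comp_hasDerivAt s ((hasDerivAt_id s).prodMk (hasDerivAt_const s t))

lemma hasDerivAt_vertical {h : ℝ × ℝ → Matrix (Fin k) (Fin k) ℝ} {s t : ℝ} (hh : DifferentiableAt ℝ h (s, t)) :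
    HasDerivAt (fun r => h (s, r)) (fderiv ℝ h (s, t) (0, 1)) t :=
  hh.hasFDerivAt.comp_hasDerivAt t ((hasDerivAt_const t s).prodMk (hasDerivAt_id t))

lemma contDiff_fderiv_apply_s5 {h : ℝ × ℝ → Matrix (Fin k) (Fin k) ℝ} (hh : ContDiff ℝ (⊤ : ℕ∞) h) (v : ℝ × ℝ) :
    ContDiff ℝ (⊤ : ℕ∞) (fun p => fderiv ℝ h p v) :=
  (hh.fderiv_right (m := (⊤ : ℕ∞)) (by simp)).clm_apply contDiff_const

/-- Symmetry of second derivatives, phrased for the iterated directional derivatives. -/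
lemma fderiv_fderiv_comm_aux {F : Type*} [NormedAddCommGroup F] [NormedSpace ℝ F]
    {h : ℝ × ℝ → F} (hh : ContDiff ℝ (⊤ : ℕ∞) h) (p v w : ℝ × ℝ) :
    fderiv ℝ (fun q => fderiv ℝ h q v) p w = fderiv ℝ (fun q => fderiv ℝ h q w) p v := by
  have hd : DifferentiableAt ℝ (fderiv ℝ h) p :=
    ((hh.fderiv_right (m := (⊤ : ℕ∞)) (by simp)).differentiable (by simp)).differentiableAt
  have key : ∀ v w, fderiv ℝ (fun q => fderiv ℝ h q v) p w
      = fderiv ℝ (fderiv ℝ h) p w v := fun v w => by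
    rw [fderiv_clm_apply hd (differentiableAt_const v)]
    simp
  rw [key, key]
  exact (hh.contDiffAt.isSymmSndFDerivAt (by
    rw [minSmoothness_of_isRCLikeNormedField]
    exact WithTop.coe_le_coe.2 (le_top : (2 : ℕ∞) ≤ ⊤))).eq w v

/-- Symmetry of second derivatives for matrix-valued functions. This and the next lemmas restate
general facts so that the topology and module structure on matrices are the native `Matrix` instances,
which agree with those induced by the sup norm only up to unfolding, too much for `rw`. -/
lemma fderiv_fderiv_comm {h : ℝ × ℝ → Matrix (Fin k) (Fin k) ℝ}
    (hh : ContDiff ℝ (⊤ : ℕ∞) h) (p v w : ℝ × ℝ) :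
    fderiv ℝ (fun q => fderiv ℝ h q v) p w = fderiv ℝ (fun q => fderiv ℝ h q w) p v :=
  fderiv_fderiv_comm_aux hh p v w

lemma fderiv_neg_matrix_apply (h : ℝ × ℝ → Matrix (Fin k) (Fin k) ℝ) (p v : ℝ × ℝ) :
    fderiv ℝ (fun q => - h q) p v = - fderiv ℝ h p v :=
  congrArg (fun L => L v) (fderiv_fun_neg (𝕜 := ℝ) (f := h) (x := p))

lemma hasDerivAt_matrix_add {X Y : ℝ → Matrix (Fin k) (Fin k) ℝ}
    {X' Y' : Matrix (Fin k) (Fin k) ℝ} {s : ℝ}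
    (hX : HasDerivAt X X' s) (hY : HasDerivAt Y Y' s) :
    HasDerivAt (fun r => X r + Y r) (X' + Y') s :=
  HasDerivAt.fun_add hX hY

lemma hasDerivAt_matrix_sub {X Y : ℝ → Matrix (Fin k) (Fin k) ℝ}
    {X' Y' : Matrix (Fin k) (Fin k) ℝ} {s : ℝ}
    (hX : HasDerivAt X X' s) (hY : HasDerivAt Y Y' s) :
    HasDerivAt (fun r => X r - Y r) (X' - Y') s :=
  HasDerivAt.fun_sub hX hY

lemma hasDerivAt_matrix_neg {X : ℝ → Matrix (Fin k) (Fin k) ℝ}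
    {X' : Matrix (Fin k) (Fin k) ℝ} {s : ℝ} (hX : HasDerivAt X X' s) :
    HasDerivAt (fun r => - X r) (- X') s :=
  HasDerivAt.fun_neg hX

end helpers

/-- analytic core of the derivative 2-functor / curvature relation.
If `f1h, f1v, f2v, f2h` are the parallel transports of the connection `(a, b)` along the
two boundary halves of rectangles, then the mixed second partial derivative at `(0,0)` of
`u (s,t) = f2h (s,t) * f2v (s) * (f1v (s,t) * f1h (t))⁻¹` is minus the curvature
`∂_s b − ∂_t a + [a, b]` at `(0,0)`. -/
theorem mixed_partial_transport_quotient_eq_neg_curvature (k : ℕ)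
    (a b : ℝ × ℝ → Matrix (Fin k) (Fin k) ℝ)
    (ha : ContDiff ℝ (⊤ : ℕ∞) a) (hb : ContDiff ℝ (⊤ : ℕ∞) b)
    (f1h : ℝ → Matrix (Fin k) (Fin k) ℝ)
    (f1v : ℝ × ℝ → Matrix (Fin k) (Fin k) ℝ)
    (f2v : ℝ → Matrix (Fin k) (Fin k) ℝ)
    (f2h : ℝ × ℝ → Matrix (Fin k) (Fin k) ℝ)
    (hf1hs : ContDiff ℝ (⊤ : ℕ∞) f1h) (hf1vs : ContDiff ℝ (⊤ : ℕ∞) f1v)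
    (hf2vs : ContDiff ℝ (⊤ : ℕ∞) f2v) (hf2hs : ContDiff ℝ (⊤ : ℕ∞) f2h)
    (hf1h0 : f1h 0 = 1)
    (hf1h : ∀ t : ℝ, HasDerivAt f1h (- b (0, t) * f1h t) t)
    (hf1v0 : ∀ t : ℝ, f1v (0, t) = 1)
    (hf1v : ∀ p : ℝ × ℝ, fderiv ℝ f1v p ((1 : ℝ), (0 : ℝ)) = - a p * f1v p)
    (hf2v0 : f2v 0 = 1)
    (hf2v : ∀ s : ℝ, HasDerivAt f2v (- a (s, 0) * f2v s) s)
    (hf2h0 : ∀ s : ℝ, f2h (s, 0) = 1)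
    (hf2h : ∀ p : ℝ × ℝ, fderiv ℝ f2h p ((0 : ℝ), (1 : ℝ)) = - b p * f2h p)
    (hunit : ∀ p : ℝ × ℝ, IsUnit (f1v p * f1h p.2)) :
    deriv (fun s : ℝ =>
        fderiv ℝ (fun p : ℝ × ℝ => f2h p * f2v p.1 * (f1v p * f1h p.2)⁻¹) (s, 0)
          ((0 : ℝ), (1 : ℝ))) 0
      = - (fderiv ℝ b ((0 : ℝ), (0 : ℝ)) ((1 : ℝ), (0 : ℝ))
          - fderiv ℝ a ((0 : ℝ), (0 : ℝ)) ((0 : ℝ), (1 : ℝ))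
          + (a (0, 0) * b (0, 0) - b (0, 0) * a (0, 0))) := by
  set G : ℝ × ℝ → Matrix (Fin k) (Fin k) ℝ := fun p => f1v p * f1h p.2 with hG
  set F : ℝ × ℝ → Matrix (Fin k) (Fin k) ℝ := fun p => f2h p * f2v p.1 with hF
  set u : ℝ × ℝ → Matrix (Fin k) (Fin k) ℝ :=
    fun p => f2h p * f2v p.1 * (f1v p * f1h p.2)⁻¹ with hu
  have hf1h' : ContDiff ℝ (⊤ : ℕ∞) (fun p : ℝ × ℝ => f1h p.2) := hf1hs.comp contDiff_snd
  have hf2v' : ContDiff ℝ (⊤ : ℕ∞) (fun p : ℝ × ℝ => f2v p.1) := hf2vs.comp contDiff_fst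
  have hGs : ContDiff ℝ (⊤ : ℕ∞) G := contDiff_matrix_mul hf1vs hf1h'
  have hFs : ContDiff ℝ (⊤ : ℕ∞) F := contDiff_matrix_mul hf2hs hf2v'
  have hus : ContDiff ℝ (⊤ : ℕ∞) u := contDiff_matrix_mul hFs (contDiff_inv_matrix hGs hunit)
  have dif : ∀ {X : ℝ × ℝ → Matrix (Fin k) (Fin k) ℝ}, ContDiff ℝ (⊤ : ℕ∞) X →
      ∀ p, DifferentiableAt ℝ X p := fun hX p =>
    (hX.differentiable (by simp)).differentiableAt
  have huG : (fun p => u p * G p) = F := by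
    funext p
    exact Matrix.nonsing_inv_mul_cancel_right _ _
      ((Matrix.isUnit_iff_isUnit_det _).1 (hunit p))
  have hG0 : G (0, 0) = 1 := by simp [hG, hf1v0, hf1h0]
  have hu0 : u (0, 0) = 1 := by simp [hu, hf1v0, hf1h0, hf2h0, hf2v0]
  have leib : ∀ p v, fderiv ℝ F p v = u p * fderiv ℝ G p v + fderiv ℝ u p v * G p := by
    intro p v
    rw [← huG]
    exact fderiv_matrix_mul_apply (dif hus p) (dif hGs p) v
  -- `f1v` is constant on the `t`-axis and `f2h` on the `s`-axis.
  have hf1vt : fderiv ℝ f1v (0, 0) (0, 1) = 0 := by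
    refine (hasDerivAt_vertical (dif hf1vs _)).unique ?_
    simpa only [hf1v0] using hasDerivAt_const (0 : ℝ) (1 : Matrix (Fin k) (Fin k) ℝ)
  have hf2hs0 : fderiv ℝ f2h (0, 0) (1, 0) = 0 := by
    refine (hasDerivAt_horizontal (dif hf2hs _)).unique ?_
    simpa only [hf2h0] using hasDerivAt_const (0 : ℝ) (1 : Matrix (Fin k) (Fin k) ℝ)
  have d1h_s : ∀ s t, fderiv ℝ (fun p : ℝ × ℝ => f1h p.2) (s, t) (1, 0) = 0 := fun s t =>
    (hasDerivAt_horizontal (dif hf1h' (s, t))).unique (hasDerivAt_const s (f1h t))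
  have d1h_t : ∀ s t, fderiv ℝ (fun p : ℝ × ℝ => f1h p.2) (s, t) (0, 1)
      = - b (0, t) * f1h t := fun s t =>
    (hasDerivAt_vertical (dif hf1h' (s, t))).unique (hf1h t)
  have d2v_s : ∀ s t, fderiv ℝ (fun p : ℝ × ℝ => f2v p.1) (s, t) (1, 0)
      = - a (s, 0) * f2v s := fun s t =>
    (hasDerivAt_horizontal (dif hf2v' (s, t))).unique (hf2v s)
  have d2v_t : ∀ s t, fderiv ℝ (fun p : ℝ × ℝ => f2v p.1) (s, t) (0, 1) = 0 := fun s t =>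
    (hasDerivAt_vertical (dif hf2v' (s, t))).unique (hasDerivAt_const t (f2v s))
  have hG_s : fderiv ℝ G (0, 0) (1, 0) = - a (0, 0) := by
    rw [hG, fderiv_matrix_mul_apply (dif hf1vs _) (dif hf1h' _), d1h_s, hf1v]
    simp [hf1v0, hf1h0]
  have hG_t : ∀ s, fderiv ℝ G (s, 0) (0, 1)
      = fderiv ℝ f1v (s, 0) (0, 1) - f1v (s, 0) * b (0, 0) := by
    intro s
    rw [hG, fderiv_matrix_mul_apply (dif hf1vs _) (dif hf1h' _), d1h_t]
    simp [hf1h0]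
    abel
  have hF_s : fderiv ℝ F (0, 0) (1, 0) = - a (0, 0) := by
    rw [hF, fderiv_matrix_mul_apply (dif hf2hs _) (dif hf2v' _), d2v_s, hf2hs0]
    simp [hf2h0, hf2v0]
  have hF_t : ∀ s, fderiv ℝ F (s, 0) (0, 1) = - (b (s, 0) * f2v s) := by
    intro s
    rw [hF, fderiv_matrix_mul_apply (dif hf2hs _) (dif hf2v' _), d2v_t, hf2h]
    simp [hf2h0]
  have hu_s : fderiv ℝ u (0, 0) (1, 0) = 0 := by
    have := leib (0, 0) (1, 0)
    rw [hF_s, hG_s, hG0, hu0] at this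
    simpa using this
  have hu_t : fderiv ℝ u (0, 0) (0, 1) = 0 := by
    have := leib (0, 0) (0, 1)
    rw [hF_t, hG_t, hG0, hu0, hf1vt] at this
    simpa [hf1v0, hf2v0] using this
  -- Mixed partial of `f1v`, obtained by differentiating `∂_s f1v = - a * f1v` in `t`.
  have hmix : fderiv ℝ (fun q => fderiv ℝ f1v q (0, 1)) (0, 0) (1, 0)
      = - fderiv ℝ a (0, 0) (0, 1) := by
    rw [fderiv_fderiv_comm hf1vs]
    simp only [hf1v]
    rw [fderiv_matrix_mul_apply (dif ha.neg _) (dif hf1vs _), hf1vt,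
      fderiv_neg_matrix_apply]
    simp [hf1v0]
  -- The `s`-derivatives at `0` of the two sides of `∂_t F = u * ∂_t G + ∂_t u * G` on `t = 0`.
  have hL : HasDerivAt (fun s => fderiv ℝ F (s, 0) (0, 1))
      (b (0, 0) * a (0, 0) - fderiv ℝ b (0, 0) (1, 0)) 0 := by
    simp only [hF_t]
    have := hasDerivAt_matrix_neg
      (hasDerivAt_matrix_mul_s5 (hasDerivAt_horizontal (dif hb (0, 0))) (hf2v 0))
    refine this.congr_deriv ?_
    simp [hf2v0]
    abel
  have hGt' : HasDerivAt (fun s => fderiv ℝ G (s, 0) (0, 1))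
      (- fderiv ℝ a (0, 0) (0, 1) + a (0, 0) * b (0, 0)) 0 := by
    simp only [hG_t]
    have h1 := hasDerivAt_horizontal (dif (contDiff_fderiv_apply_s5 hf1vs (0, 1)) (0, 0))
    have h2 := hasDerivAt_matrix_mul_s5 (hasDerivAt_horizontal (dif hf1vs (0, 0)))
      (hasDerivAt_const (0 : ℝ) (b (0, 0)))
    refine (hasDerivAt_matrix_sub h1 h2).congr_deriv ?_
    rw [hmix, hf1v]
    simp [hf1v0]
  have hut' := hasDerivAt_horizontal (dif (contDiff_fderiv_apply_s5 hus (0, 1)) (0, 0))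
  have hR := hasDerivAt_matrix_add
    (hasDerivAt_matrix_mul_s5 (hasDerivAt_horizontal (dif hus (0, 0))) hGt')
    (hasDerivAt_matrix_mul_s5 hut' (hasDerivAt_horizontal (dif hGs (0, 0))))
  have hLR := hL.unique (hR.congr_of_eventuallyEq
    (Filter.Eventually.of_forall fun s => leib (s, 0) (0, 1)))
  rw [hu_s, hu_t, hu0, hG0] at hLR
  refine hut'.deriv.trans ?_
  simp only [one_mul, mul_one, zero_mul, add_zero, zero_add] at hLR
  rw [← sub_eq_iff_eq_add'] at hLR
  rw [← hLR]
  abel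
end

section
/- Let k be a natural number, let a, a' : ℝ → Matrix k k ℝ be continuous, and let g : ℝ → Matrix k k ℝ be continuously differentiable with g (t) invertible for all t, satisfying the gauge relation a' (t) = g (t) * a (t) * (g t)⁻¹ − g' (t) * (g t)⁻¹ for all t. Let u, v : ℝ → Matrix k k ℝ be differentiable with u 0 = 1, v 0 = 1, u' (t) = − a (t) * u (t) and v' (t) = − a' (t) * v (t) for all t. Then v (t) = g (t) * u (t) * (g 0)⁻¹ for all t: parallel transports of gauge-equivalent connections are conjugate by the gauge transformation. -/
/-!
Both sides of the claim solve the same linear initial value problem `x' = -a' x`, `x 0 = 1`.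
For `w t = g t * u t * (g 0)⁻¹`, the product rule gives `w' = (g' - g a) u (g 0)⁻¹`, and the gauge
relation multiplied on the right by `g` reads `a' g = g a - g'`, so `w' = -a' w`. A linear equation
with continuous coefficients is Lipschitz in `x`, uniformly on compact time intervals, so solutions
are unique (`linear_ode_unique`).

The entrywise sup norm on matrices is not submultiplicative, so the matrices do not form a normed
ring. The product rule is taken from multiplication as a continuous bilinear map, and the Lipschitz
bound from `‖A * B‖ ≤ k ‖A‖ ‖B‖`.
-/

attribute [local instance] Matrix.normedAddCommGroup Matrix.normedSpace

/-- Matrix multiplication as a continuous bilinear map. -/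
noncomputable def matrixMulCLM (k : ℕ) :
    Matrix (Fin k) (Fin k) ℝ →L[ℝ] Matrix (Fin k) (Fin k) ℝ →L[ℝ] Matrix (Fin k) (Fin k) ℝ :=
  (LinearMap.mul ℝ (Matrix (Fin k) (Fin k) ℝ)).toContinuousBilinearMap

lemma hasDerivAt_matrix_mul_s8 {k : ℕ} {f h : ℝ → Matrix (Fin k) (Fin k) ℝ}
    {f' h' : Matrix (Fin k) (Fin k) ℝ} {t : ℝ}
    (hf : HasDerivAt f f' t) (hh : HasDerivAt h h' t) :
    HasDerivAt (fun s => f s * h s) (f t * h' + f' * h t) t :=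
  (matrixMulCLM k).hasDerivAt_of_bilinear (fun _ => hf) (fun _ => hh)

lemma norm_matrix_mul_le {k : ℕ} (A B : Matrix (Fin k) (Fin k) ℝ) :
    ‖A * B‖ ≤ k * ‖A‖ * ‖B‖ := by
  refine (Matrix.norm_le_iff (by positivity)).mpr fun i j => ?_
  rw [Matrix.mul_apply]
  calc ‖∑ l, A i l * B l j‖ ≤ ∑ _l : Fin k, ‖A‖ * ‖B‖ := norm_sum_le_of_le _ fun l _ => by
        rw [norm_mul]
        exact mul_le_mul (A.norm_entry_le_entrywise_sup_norm) (B.norm_entry_le_entrywise_sup_norm)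
          (norm_nonneg _) (norm_nonneg _)
    _ = k * ‖A‖ * ‖B‖ := by simp [mul_assoc]

lemma linear_ode_unique {k : ℕ} {b x y : ℝ → Matrix (Fin k) (Fin k) ℝ} (hb : Continuous b)
    (hx : ∀ t, HasDerivAt x (-b t * x t) t) (hy : ∀ t, HasDerivAt y (-b t * y t) t)
    (h0 : x 0 = y 0) (t : ℝ) : x t = y t := by
  obtain ⟨C, hC⟩ := (isCompact_Icc (a := -(|t| + 1)) (b := |t| + 1)).exists_bound_of_continuousOn
    hb.neg.continuousOn
  have ht := abs_le.mp (le_refl |t|)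
  have ht0 := abs_nonneg t
  refine ODE_solution_unique_of_mem_Ioo (v := fun s z => -b s * z)
    (s := fun _ => Set.univ) (K := (k * C).toNNReal) (a := -(|t| + 1)) (b := |t| + 1) (t₀ := 0)
    ?_ ⟨by linarith, by linarith⟩ (fun s _ => ⟨hx s, trivial⟩) (fun s _ => ⟨hy s, trivial⟩) h0
    ⟨by linarith, by linarith⟩
  intro s hs
  refine (LipschitzWith.of_dist_le_mul fun z w => ?_).lipschitzOnWith
  rw [dist_eq_norm, dist_eq_norm, ← mul_sub]
  refine (norm_matrix_mul_le _ _).trans (mul_le_mul_of_nonneg_right ?_ (norm_nonneg _))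
  exact (mul_le_mul_of_nonneg_left (hC s (Set.Ioo_subset_Icc_self hs)) (Nat.cast_nonneg k)).trans
    (Real.le_coe_toNNReal _)

/-- morphism part of the equivalence between smooth functors and 1-forms.
Parallel transports of gauge-equivalent matrix-valued connections are conjugate by the
gauge transformation: if `a' = g a g⁻¹ − g' g⁻¹` then `v (t) = g (t) * u (t) * (g 0)⁻¹`. -/
theorem parallel_transport_gauge_conjugate (k : ℕ)
    (a a' : ℝ → Matrix (Fin k) (Fin k) ℝ)
    (ha : Continuous a) (ha' : Continuous a')
    (g g' : ℝ → Matrix (Fin k) (Fin k) ℝ)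
    (hg : ∀ t : ℝ, HasDerivAt g (g' t) t) (hg' : Continuous g')
    (hgu : ∀ t : ℝ, IsUnit (g t))
    (hgauge : ∀ t : ℝ, a' t = g t * a t * (g t)⁻¹ - g' t * (g t)⁻¹)
    (u v : ℝ → Matrix (Fin k) (Fin k) ℝ)
    (hu0 : u 0 = 1) (hv0 : v 0 = 1)
    (hu : ∀ t : ℝ, HasDerivAt u (- a t * u t) t)
    (hv : ∀ t : ℝ, HasDerivAt v (- a' t * v t) t) :
    ∀ t : ℝ, v t = g t * u t * (g 0)⁻¹ := by
  refine linear_ode_unique ha' hv (fun t => ?_) ?_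
  · have hd := hasDerivAt_matrix_mul_s8 (hasDerivAt_matrix_mul_s8 (hg t) (hu t))
      (hasDerivAt_const t (g 0)⁻¹)
    have hinv : (g t)⁻¹ * g t = 1 :=
      Matrix.nonsing_inv_mul _ ((Matrix.isUnit_iff_isUnit_det _).mp (hgu t))
    have hag : a' t * g t = g t * a t - g' t := by
      rw [hgauge t, sub_mul, mul_assoc _ _ (g t), mul_assoc _ _ (g t), hinv, mul_one, mul_one]
    convert hd using 1
    rw [← mul_assoc, ← mul_assoc, neg_mul, hag]
    noncomm_ring
  · rw [hu0, hv0, mul_one,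
      Matrix.mul_nonsing_inv _ ((Matrix.isUnit_iff_isUnit_det _).mp (hgu 0))]
end

section
/- Let d, k, m be natural numbers, let A : Fin d → ((Fin d → ℝ) → Matrix k k ℝ) be a family of smooth maps, let B : Fin d → Fin d → ((Fin d → ℝ) → Matrix m m ℝ) be a family of smooth maps, and let τ : Matrix m m ℝ →ₗ[ℝ] Matrix k k ℝ be a linear map. Suppose the fake curvature vanishes: for all i, j ∈ Fin d and all x, ∂_i (A j) x − ∂_j (A i) x + [A i x, A j x] = τ (B i j x), where ∂_i f x denotes the partial derivative fderiv ℝ f x applied to the i-th standard basis vector. Then the BF field equation holds: for all i, j, l ∈ Fin d and all x, τ (∂_i (B j l) x + ∂_j (B l i) x + ∂_l (B i j) x) + [A i x, τ (B j l x)] + [A j x, τ (B l i x)] + [A l x, τ (B i j x)] = 0. (Hence every pair (A, B) with dA + [A ∧ A] = t_* ∘ B — i.e. every smooth 2-functor — satisfies the equation of motion t_* dB + [A ∧ t_* B] = 0 of BF theory, so the critical points of the BF action are exactly such pairs.) -/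
/-!
The field equation is the Bianchi identity in disguise. Writing `F i j` for the curvature of `A`,
fake flatness says `F i j = τ ∘ B i j`. A linear map commutes with differentiation, so
`τ (∂_i (B j l)) = ∂_i (F j l)`, and the claim becomes
`∑ (∂_i (F j l) + [A i, F j l]) = 0`, the sum running over the cyclic permutations of `(i, j, l)`.
Expanding `F`, the second derivatives cancel by their symmetry (`fderiv_partial_comm`), the terms
`[∂A, A]` cancel by the Leibniz rule (`hasFDerivAt_matrix_mul`), and the terms cubic in `A` cancel
by the Jacobi identity.
-/

attribute [local instance] Matrix.normedAddCommGroup Matrix.normedSpace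

/-- The Leibniz rule for matrix products, evaluated on a vector. The entrywise sup norm is not
submultiplicative, so the normed-algebra version is not available; matrix multiplication is instead
treated as a bilinear map between finite-dimensional spaces. -/
theorem hasFDerivAt_matrix_mul {E : Type*} [NormedAddCommGroup E] [NormedSpace ℝ E] {k : ℕ}
    {f g : E → Matrix (Fin k) (Fin k) ℝ} {x : E}
    (hf : DifferentiableAt ℝ f x) (hg : DifferentiableAt ℝ g x) :
    ∃ D : E →L[ℝ] Matrix (Fin k) (Fin k) ℝ, HasFDerivAt (fun y => f y * g y) D x ∧
      ∀ v, D v = f x * fderiv ℝ g x v + fderiv ℝ f x v * g x := by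
  let L : Matrix (Fin k) (Fin k) ℝ →L[ℝ] Matrix (Fin k) (Fin k) ℝ →L[ℝ] Matrix (Fin k) (Fin k) ℝ :=
    LinearMap.toContinuousLinearMap
      ((LinearMap.toContinuousLinearMap (𝕜 := ℝ) (E := Matrix (Fin k) (Fin k) ℝ)
        (F' := Matrix (Fin k) (Fin k) ℝ)).toLinearMap ∘ₗ
        LinearMap.mul ℝ (Matrix (Fin k) (Fin k) ℝ))
  exact ⟨_, L.hasFDerivAt_of_bilinear hf.hasFDerivAt hg.hasFDerivAt, fun v => rfl⟩

theorem hasFDerivAt_partial {E F : Type*} [NormedAddCommGroup E] [NormedSpace ℝ E]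
    [NormedAddCommGroup F] [NormedSpace ℝ F] {f : E → F} (hf : ContDiff ℝ (⊤ : ℕ∞) f) (x v : E) :
    HasFDerivAt (fun y => fderiv ℝ f y v) ((fderiv ℝ (fderiv ℝ f) x).flip v) x := by
  have h : DifferentiableAt ℝ (fderiv ℝ f) x :=
    ((hf.fderiv_right (m := 1) (by norm_cast)).differentiable (by norm_num)) x
  simpa using h.hasFDerivAt.clm_apply (hasFDerivAt_const v x)

theorem fderiv_partial_comm {E F : Type*} [NormedAddCommGroup E] [NormedSpace ℝ E]
    [NormedAddCommGroup F] [NormedSpace ℝ F] {f : E → F} (hf : ContDiff ℝ (⊤ : ℕ∞) f) (x v w : E) :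
    fderiv ℝ (fderiv ℝ f) x v w = fderiv ℝ (fderiv ℝ f) x w v :=
  (hf.contDiffAt.isSymmSndFDerivAt (by
    rw [minSmoothness_of_isRCLikeNormedField]
    exact WithTop.coe_le_coe.2 (le_top : (2 : ℕ∞) ≤ ⊤))) v w

/-- Proposition 4.6 of the paper, in coordinates. If a pair `(A, B)` of a
`𝔤`-valued 1-form and an `𝔥`-valued 2-form on `ℝᵈ` satisfies the fake-flatness condition
`dA + [A ∧ A] = τ ∘ B`, then the BF field equation `τ(dB) + [A ∧ τ(B)] = 0` holds; hence
smooth 2-functors are critical points of the BF action. -/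
theorem bf_field_equation_of_fake_flat (d k m : ℕ)
    (A : Fin d → ((Fin d → ℝ) → Matrix (Fin k) (Fin k) ℝ))
    (B : Fin d → Fin d → ((Fin d → ℝ) → Matrix (Fin m) (Fin m) ℝ))
    (hA : ∀ i, ContDiff ℝ (⊤ : ℕ∞) (A i))
    (hB : ∀ i j, ContDiff ℝ (⊤ : ℕ∞) (B i j))
    (τ : Matrix (Fin m) (Fin m) ℝ →ₗ[ℝ] Matrix (Fin k) (Fin k) ℝ)
    (hflat : ∀ (i j : Fin d) (x : Fin d → ℝ),
      fderiv ℝ (A j) x (Pi.single i 1) - fderiv ℝ (A i) x (Pi.single j 1)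
          + (A i x * A j x - A j x * A i x)
        = τ (B i j x)) :
    ∀ (i j l : Fin d) (x : Fin d → ℝ),
      τ (fderiv ℝ (B j l) x (Pi.single i 1) + fderiv ℝ (B l i) x (Pi.single j 1)
            + fderiv ℝ (B i j) x (Pi.single l 1))
          + (A i x * τ (B j l x) - τ (B j l x) * A i x)
          + (A j x * τ (B l i x) - τ (B l i x) * A j x)
          + (A l x * τ (B i j x) - τ (B i j x) * A l x)
        = 0 := by
  have hdA : ∀ i x, DifferentiableAt ℝ (A i) x := fun i x => (hA i).differentiable (by simp) x
  have hdB : ∀ i j x, DifferentiableAt ℝ (B i j) x :=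
    fun i j x => (hB i j).differentiable (by simp) x
  -- `τ (∂_v (B i j))` is the derivative of the curvature `F i j` in the direction `v`.
  have key : ∀ (i j : Fin d) (x v : Fin d → ℝ),
      τ (fderiv ℝ (B i j) x v) =
        fderiv ℝ (fderiv ℝ (A j)) x v (Pi.single i 1)
          - fderiv ℝ (fderiv ℝ (A i)) x v (Pi.single j 1)
          + ((A i x * fderiv ℝ (A j) x v + fderiv ℝ (A i) x v * A j x)
            - (A j x * fderiv ℝ (A i) x v + fderiv ℝ (A j) x v * A i x)) := by
    intro i j x v
    obtain ⟨D₁, h₁, e₁⟩ := hasFDerivAt_matrix_mul (hdA i x) (hdA j x)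
    obtain ⟨D₂, h₂, e₂⟩ := hasFDerivAt_matrix_mul (hdA j x) (hdA i x)
    have hF := ((hasFDerivAt_partial (hA j) x (Pi.single i 1)).fun_sub
      (hasFDerivAt_partial (hA i) x (Pi.single j 1))).fun_add (h₁.fun_sub h₂)
    have hτ : HasFDerivAt (fun y => τ (B i j y))
        ((LinearMap.toContinuousLinearMap τ).comp (fderiv ℝ (B i j) x)) x :=
      (LinearMap.toContinuousLinearMap τ).hasFDerivAt.comp x (hdB i j x).hasFDerivAt
    have hτF := hF.congr_of_eventuallyEq
      (Filter.Eventually.of_forall fun y => (hflat i j y).symm)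
    have := DFunLike.congr_fun (hτ.unique hτF) v
    rw [← e₁, ← e₂]
    exact this
  have hcomm : ∀ (a : Fin d) (x v w : Fin d → ℝ),
      fderiv ℝ (fderiv ℝ (A a)) x v w = fderiv ℝ (fderiv ℝ (A a)) x w v :=
    fun a x v w => fderiv_partial_comm (hA a) x v w
  intro i j l x
  rw [map_add, map_add, key, key, key, ← hflat i j, ← hflat j l, ← hflat l i,
    hcomm l x (Pi.single i 1) (Pi.single j 1),
    hcomm j x (Pi.single i 1) (Pi.single l 1),
    hcomm i x (Pi.single j 1) (Pi.single l 1)]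
  noncomm_ring
end
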